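/- Let S be a proper convex subset of the chambers of a hyperplane arrangement 𝓗 in general position in ℝ^d, with |S| = Σ_{i=0}^d C(k,i) for some real k ≥ d−1, where C(k,i) denotes the generalized binomial coefficient k(k−1)⋯(k−i+1)/i!. If the thickening T_S is bounded in ℝ^d, then |∂S| ≥ Σ_{i=0}^{d−1} (d−i+1)·C(k,i). -/

import Mathlib

open Set Topology

noncomputable section

/-- A hyperplane arrangement of `n` affine hyperplanes in `ℝ^d`, given by
nonzero normal vectors and offsets: the `i`-th hyperplane is
`{x | ∑ j, normal i j * x j = offset i}`. -/
structure Arrangement (d n : ℕ) where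
  normal : Fin n → (Fin d → ℝ)
  offset : Fin n → ℝ
  normal_ne : ∀ i, normal i ≠ 0

/-- The thickening (regular open hull) `T_S` of a set `S` of chambers. -/
def thickening {d : ℕ} (S : Set (Set (Fin d → ℝ))) : Set (Fin d → ℝ) :=
  interior (closure (⋃ C ∈ S, C))

/-- The set of connected components of a subset `X` of a topological space. -/
def connComps {α : Type*} [TopologicalSpace α] (X : Set α) : Set (Set α) :=
  {c | ∃ x ∈ X, c = connectedComponentIn X x}

namespace Arrangement

variable {d n : ℕ} (𝓗 : Arrangement d n)

/-- The `i`-th hyperplane of the arrangement. -/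
def H (i : Fin n) : Set (Fin d → ℝ) := {x | ∑ j, 𝓗.normal i j * x j = 𝓗.offset i}

/-- The positive open half-space determined by the `i`-th hyperplane. -/
def pos (i : Fin n) : Set (Fin d → ℝ) := {x | 𝓗.offset i < ∑ j, 𝓗.normal i j * x j}

/-- The negative open half-space determined by the `i`-th hyperplane. -/
def neg (i : Fin n) : Set (Fin d → ℝ) := {x | ∑ j, 𝓗.normal i j * x j < 𝓗.offset i}

/-- The complement of the union of the hyperplanes. -/
def free : Set (Fin d → ℝ) := {x | ∀ i, x ∉ 𝓗.H i}

/-- The chambers: connected components of the complement of the hyperplanes. -/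
def chambers : Set (Set (Fin d → ℝ)) :=
  {C | ∃ x ∈ 𝓗.free, C = connectedComponentIn 𝓗.free x}

/-- General position: the normals of any `≤ d` hyperplanes are linearly independent
(so that their intersection is an affine subspace of the right dimension), and no
`d+1` hyperplanes have a common point. -/
def GeneralPosition : Prop :=
  (∀ A : Finset (Fin n), A.card ≤ d →
      LinearIndependent ℝ (fun i : A => 𝓗.normal i.1)) ∧
  (∀ A : Finset (Fin n), A.card = d + 1 → (⋂ i ∈ A, 𝓗.H i) = ∅)

/-- Hyperplane `e` separates `C` from `C'`. -/
def Separates (e : Fin n) (C C' : Set (Fin d → ℝ)) : Prop :=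
  (C ⊆ 𝓗.pos e ∧ C' ⊆ 𝓗.neg e) ∨ (C ⊆ 𝓗.neg e ∧ C' ⊆ 𝓗.pos e)

/-- Adjacency in the chamber graph: two chambers are adjacent iff they are separated
by exactly one hyperplane (equivalently, share a common facet). -/
def Adj (C C' : Set (Fin d → ℝ)) : Prop :=
  C ∈ 𝓗.chambers ∧ C' ∈ 𝓗.chambers ∧ ∃! e : Fin n, 𝓗.Separates e C C'

/-- The edge boundary of a set `S` of chambers, encoded as the set of ordered pairs
`(C, C')` of adjacent chambers with `C ∈ S` and `C' ∉ S` (each boundary edge is thus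
counted exactly once). -/
def edgeBoundary (S : Set (Set (Fin d → ℝ))) :
    Set ((Set (Fin d → ℝ)) × (Set (Fin d → ℝ))) :=
  {q | q.1 ∈ S ∧ q.2 ∉ S ∧ 𝓗.Adj q.1 q.2}

/-- The stratum `T_S(A) = T_S ∩ L_A`. -/
def stratum (S : Set (Set (Fin d → ℝ))) (A : Finset (Fin n)) : Set (Fin d → ℝ) :=
  thickening S ∩ ⋂ i ∈ A, 𝓗.H i

/-- The support of `S`: those `A` with nonempty stratum. -/
def supp (S : Set (Set (Fin d → ℝ))) : Set (Finset (Fin n)) :=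
  {A | (𝓗.stratum S A).Nonempty}

/-- `H_f` bounds the stratum `T_S(A)`: the stratum lies entirely in one of the open
half-spaces of `H_f`, and `H_f` meets the closure of the stratum within `L_A`. -/
def Bounds (f : Fin n) (S : Set (Set (Fin d → ℝ))) (A : Finset (Fin n)) : Prop :=
  (𝓗.stratum S A ⊆ 𝓗.pos f ∨ 𝓗.stratum S A ⊆ 𝓗.neg f) ∧
  (𝓗.H f ∩ closure (𝓗.stratum S A) ∩ ⋂ i ∈ A, 𝓗.H i).Nonempty

/-- `S` is strata-connected if every nonempty stratum is connected. -/
def StrataConnected (S : Set (Set (Fin d → ℝ))) : Prop :=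
  ∀ A ∈ 𝓗.supp S, IsConnected (𝓗.stratum S A)

end Arrangement

/-- The generalized binomial coefficient `C(x, i) = x(x-1)⋯(x-i+1)/i!`. -/
noncomputable def gchoose (x : ℝ) (i : ℕ) : ℝ :=
  (∏ j ∈ Finset.range i, (x - j)) / (Nat.factorial i)

/-!
For a convex set `S` of chambers, the sets `A` whose flat `L_A` meets the thickening `T` form a
simplicial complex, which has at least `|S|` faces: the sign patterns of the chambers in `S`
shatter only faces, so this is Pajor's inequality.

Let `A` be a face with `|A| < d`. The bounded convex set `T ∩ L_A` has at least `d - |A| + 1`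
facets. Near a generic point of a facet lying on `H_f`, all `2 ^ |A|` sign patterns on `A` occur
at boundary edges of `S` that cross `H_f`: the family of crossings of `H_f` strongly shatters `A`.
A family strongly shatters at most as many sets as it has members (the dual form of Pajor's
inequality), so `∑_A (d - |A| + 1) ≤ |∂S|`.

By Lovász's form of the Kruskal–Katona theorem, the `f`-vector of the complex, once it drops below
`C(k, i)`, stays below. Since the weights `d - i + 1` decrease, the weighted sum of the `f`-vector
dominates that of the `C(k, i)` as soon as the unweighted one does.
-/

lemma gchoose_zero (x : ℝ) : gchoose x 0 = 1 := by simp [gchoose]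

lemma gchoose_succ (x : ℝ) (i : ℕ) : gchoose x (i + 1) = gchoose x i * (x - i) / (i + 1) := by
  simp only [gchoose, Finset.prod_range_succ, Nat.factorial_succ]
  push_cast
  field_simp

lemma gchoose_succ' (x : ℝ) (i : ℕ) : gchoose x (i + 1) = x / (i + 1) * gchoose (x - 1) i := by
  have shift : ∏ j ∈ Finset.range i, (x - ↑(j + 1)) = ∏ j ∈ Finset.range i, (x - 1 - j) :=
    Finset.prod_congr rfl fun j _ => by push_cast; ring
  simp only [gchoose, Finset.prod_range_succ', Nat.factorial_succ, shift]
  push_cast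
  field_simp
  simp [mul_comm]

lemma gchoose_nonneg {x : ℝ} {i : ℕ} (h : (i : ℝ) - 1 ≤ x) : 0 ≤ gchoose x i := by
  refine div_nonneg (Finset.prod_nonneg fun j hj => sub_nonneg.2 ?_) (by positivity)
  have : ((j + 1 : ℕ) : ℝ) ≤ i := Nat.cast_le.2 (Finset.mem_range.1 hj)
  push_cast at this
  linarith

lemma gchoose_self (i : ℕ) : gchoose i i = 1 := by
  induction i with
  | zero => exact gchoose_zero _
  | succ i ih =>
    rw [gchoose_succ', Nat.cast_add_one, add_sub_cancel_right, ih, mul_one]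
    exact div_self (by positivity)

lemma continuous_gchoose (i : ℕ) : Continuous fun x => gchoose x i := by
  unfold gchoose
  fun_prop

lemma exists_gchoose_eq {x D : ℝ} {r : ℕ} (hr : r ≤ x) (h1 : 1 ≤ D) (hD : D ≤ gchoose x r) :
    ∃ y ∈ Icc (r : ℝ) x, gchoose y r = D :=
  intermediate_value_Icc hr (continuous_gchoose r).continuousOn
    ⟨(gchoose_self r).trans_le h1, hD⟩

section KruskalKatona

open scoped Finset FinsetFamily

variable {α : Type*} [DecidableEq α] {𝒜 : Finset (Finset α)} {r : ℕ}

lemma memberSubfamily_subset_nonMemberSubfamily_shadow (v : α) (𝒜 : Finset (Finset α)) :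
    𝒜.memberSubfamily v ⊆ (∂ 𝒜).nonMemberSubfamily v := fun s hs => by
  rw [Finset.mem_memberSubfamily] at hs
  exact Finset.mem_nonMemberSubfamily.2
    ⟨Finset.mem_shadow_iff_insert_mem.2 ⟨v, hs.2, hs.1⟩, hs.2⟩

lemma shadow_memberSubfamily_subset (v : α) (𝒜 : Finset (Finset α)) :
    ∂ (𝒜.memberSubfamily v) ⊆ (∂ 𝒜).memberSubfamily v := fun s hs => by
  obtain ⟨a, has, hs⟩ := Finset.mem_shadow_iff_insert_mem.1 hs
  obtain ⟨hmem, hv⟩ := Finset.mem_memberSubfamily.1 hs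
  simp only [Finset.mem_insert, not_or] at hv
  refine Finset.mem_memberSubfamily.2 ⟨Finset.mem_shadow_iff_insert_mem.2 ⟨a, ?_, ?_⟩, hv.2⟩
  · simpa [Ne.symm hv.1] using has
  · rwa [Finset.insert_comm]

lemma sized_memberSubfamily {v : α} (h𝒜 : (𝒜 : Set (Finset α)).Sized (r + 1)) :
    (𝒜.memberSubfamily v : Set (Finset α)).Sized r := fun s hs => by
  obtain ⟨hmem, hv⟩ := Finset.mem_memberSubfamily.1 (Finset.mem_coe.1 hs)
  have := h𝒜 hmem
  rw [Finset.card_insert_of_notMem hv] at this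
  omega

lemma card_memberSubfamily_add_card_memberSubfamily_shadow_le (v : α) (𝒜 : Finset (Finset α)) :
    #(𝒜.memberSubfamily v) + #((∂ 𝒜).memberSubfamily v) ≤ #(∂ 𝒜) := by
  rw [← Finset.card_memberSubfamily_add_card_nonMemberSubfamily v (∂ 𝒜), add_comm]
  gcongr
  exact memberSubfamily_subset_nonMemberSubfamily_shadow v 𝒜

lemma shadow_nonempty_of_sized (h𝒜 : (𝒜 : Set (Finset α)).Sized (r + 1)) (hne : 𝒜.Nonempty) :
    (∂ 𝒜).Nonempty := by
  obtain ⟨s, hs⟩ := hne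
  obtain ⟨a, ha⟩ := Finset.card_pos.1 (r.succ_pos.trans_eq (h𝒜 hs).symm)
  exact ⟨_, Finset.erase_mem_shadow hs ha⟩

lemma card_memberSubfamily_eq_card_filter (v : α) (𝒜 : Finset (Finset α)) :
    #(𝒜.memberSubfamily v) = #{s ∈ 𝒜 | v ∈ s} :=
  Finset.card_image_of_injOn ((Finset.erase_injOn' v).mono fun s hs => by
    simpa using (Finset.mem_filter.1 (Finset.mem_coe.1 hs)).2)

lemma sum_card_memberSubfamily (h𝒜 : (𝒜 : Set (Finset α)).Sized r) {V : Finset α}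
    (hV : ∀ s ∈ 𝒜, s ⊆ V) : ∑ v ∈ V, #(𝒜.memberSubfamily v) = r * #𝒜 := by
  calc ∑ v ∈ V, #(𝒜.memberSubfamily v) = ∑ v ∈ V, #{s ∈ 𝒜 | v ∈ s} :=
        Finset.sum_congr rfl fun v _ => card_memberSubfamily_eq_card_filter v 𝒜
    _ = ∑ s ∈ 𝒜, #{v ∈ V | v ∈ s} := Finset.sum_card_bipartiteAbove_eq_sum_card_bipartiteBelow _
    _ = ∑ _s ∈ 𝒜, r := Finset.sum_congr rfl fun s hs => by
        rw [Finset.filter_mem_eq_inter, Finset.inter_eq_right.2 (hV s hs), h𝒜 hs]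
    _ = r * #𝒜 := by rw [Finset.sum_const, smul_eq_mul, mul_comm]

/-- Applied with `a` the size of the link of a vertex in a family and `D` that of its link in the
shadow, where `hstep` is the induction hypothesis. -/
lemma mul_le_mul_of_add_le_gchoose {x : ℝ} {a D : ℕ} (hx : (r : ℝ) + 1 ≤ x)
    (hadd : (a + D : ℝ) ≤ gchoose x (r + 1)) (hzero : D = 0 → a = 0)
    (hstep : ∀ y, 1 ≤ r → (r : ℝ) ≤ y → (D : ℝ) = gchoose y r → (a : ℝ) ≤ gchoose y (r + 1)) :
    ((r : ℝ) + 1) * a ≤ (x - (r + 1)) * D := by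
  obtain hlarge | hsmall := le_or_gt (gchoose (x - 1) r) D
  · rw [gchoose_succ', div_mul_eq_mul_div, le_div_iff₀ (by positivity)] at hadd
    have : x * gchoose (x - 1) r ≤ x * D := by gcongr; linarith
    linarith
  obtain rfl | hD := D.eq_zero_or_pos
  · simp [hzero rfl]
  have hD1 : (1 : ℝ) ≤ D := Nat.one_le_cast.2 hD
  have hr : 1 ≤ r := Nat.one_le_iff_ne_zero.2 fun h0 => by
    rw [h0, gchoose_zero] at hsmall
    exact hsmall.not_ge hD1
  obtain ⟨y, ⟨hry, hyx⟩, hy⟩ := exists_gchoose_eq (by linarith) hD1 hsmall.le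
  calc ((r : ℝ) + 1) * a ≤ (r + 1) * gchoose y (r + 1) := by gcongr; exact hstep y hr hry hy.symm
    _ = (y - r) * D := by rw [gchoose_succ, hy]; field_simp
    _ ≤ (x - (r + 1)) * D := by gcongr ?_ * _; linarith

/-- Lovász's form of the **Kruskal–Katona theorem**, by induction on `r` through the links of the
vertices. -/
theorem card_le_gchoose_of_card_shadow_le (hr : 1 ≤ r) {x : ℝ} (hx : r ≤ x)
    (h𝒜 : (𝒜 : Set (Finset α)).Sized (r + 1)) (hshadow : #(∂ 𝒜) ≤ gchoose x r) :
    #𝒜 ≤ gchoose x (r + 1) := by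
  induction r generalizing x 𝒜 with
  | zero => exact absurd hr (by simp)
  | succ r ih =>
  push_cast at hx
  have link (v : α) : ((r : ℝ) + 1) * #(𝒜.memberSubfamily v) ≤
      (x - (r + 1)) * #((∂ 𝒜).memberSubfamily v) := by
    have hsized := sized_memberSubfamily (v := v) h𝒜
    have hsub := Finset.card_le_card (shadow_memberSubfamily_subset v 𝒜)
    refine mul_le_mul_of_add_le_gchoose hx ?_ (fun h0 => ?_) fun y hr hy hD => ?_
    · exact_mod_cast (Nat.cast_le.2
        (card_memberSubfamily_add_card_memberSubfamily_shadow_le v 𝒜)).trans hshadow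
    · by_contra hne
      have := (shadow_nonempty_of_sized hsized (Finset.card_ne_zero.1 hne)).card_pos
      omega
    · exact ih hr hy hsized (hD ▸ Nat.cast_le.2 hsub)
  set V := 𝒜.sup id
  have hV : ∀ s ∈ 𝒜, s ⊆ V := fun s hs => Finset.le_sup (f := id) hs
  have hV' : ∀ s ∈ ∂ 𝒜, s ⊆ V := fun s hs => by
    obtain ⟨t, ht, hst⟩ := Finset.exists_subset_of_mem_shadow hs
    exact hst.trans (hV t ht)
  have degrees : ((r : ℝ) + 1) * ((r + 2) * #𝒜) ≤ (x - (r + 1)) * ((r + 1) * #(∂ 𝒜)) := by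
    have h := Finset.sum_le_sum fun v (_ : v ∈ V) => link v
    rw [← Finset.mul_sum, ← Finset.mul_sum, ← Nat.cast_sum, ← Nat.cast_sum,
      sum_card_memberSubfamily h𝒜 hV, sum_card_memberSubfamily h𝒜.shadow hV'] at h
    exact_mod_cast h
  rw [gchoose_succ, le_div_iff₀ (by positivity)]
  push_cast
  refine le_of_mul_le_mul_left ?_ (by positivity : (0 : ℝ) < r + 1)
  calc ((r : ℝ) + 1) * (#𝒜 * (r + 1 + 1)) = (r + 1) * ((r + 2) * #𝒜) := by ring
    _ ≤ (x - (r + 1)) * ((r + 1) * #(∂ 𝒜)) := degrees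
    _ ≤ (x - (r + 1)) * ((r + 1) * gchoose x (r + 1)) := by gcongr
    _ = (r + 1) * (gchoose x (r + 1) * (x - (r + 1))) := by ring

end KruskalKatona

section WeightedSums

open scoped Finset FinsetFamily

theorem sum_mul_le_sum_mul_of_single_crossing {ι R : Type*} [LinearOrder ι] [CommRing R]
    [LinearOrder R] [IsStrictOrderedRing R] {s : Finset ι} {w f g : ι → R}
    (hw : AntitoneOn w s) (hw0 : ∀ i ∈ s, 0 ≤ w i)
    (hcross : ∀ i ∈ s, ∀ j ∈ s, i < j → f i < g i → f j ≤ g j)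
    (hsum : ∑ i ∈ s, g i ≤ ∑ i ∈ s, f i) : ∑ i ∈ s, w i * g i ≤ ∑ i ∈ s, w i * f i := by
  obtain hne | hempty := {i ∈ s | f i < g i}.eq_empty_or_nonempty.symm
  · obtain ⟨m, hm, hmin⟩ := Finset.exists_min_image _ id hne
    obtain ⟨hms, hfg⟩ := Finset.mem_filter.1 hm
    have compare : ∀ i ∈ s, w m * (f i - g i) ≤ w i * (f i - g i) := fun i hi => by
      rcases lt_trichotomy i m with him | rfl | hmi
      · have hgf : g i ≤ f i := not_lt.1 fun h =>
          (hmin i (Finset.mem_filter.2 ⟨hi, h⟩)).not_gt him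
        exact mul_le_mul_of_nonneg_right (hw hi hms him.le) (sub_nonneg.2 hgf)
      · rfl
      · exact mul_le_mul_of_nonpos_right (hw hms hi hmi.le)
          (sub_nonpos.2 (hcross m hms i hi hmi hfg))
    rw [← sub_nonneg, ← Finset.sum_sub_distrib]
    calc 0 ≤ w m * (∑ i ∈ s, f i - ∑ i ∈ s, g i) := mul_nonneg (hw0 m hms) (sub_nonneg.2 hsum)
      _ = ∑ i ∈ s, w m * (f i - g i) := by rw [← Finset.sum_sub_distrib, Finset.mul_sum]
      _ ≤ ∑ i ∈ s, w i * (f i - g i) := Finset.sum_le_sum compare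
      _ = ∑ i ∈ s, (w i * f i - w i * g i) := by simp only [mul_sub]
  · refine Finset.sum_le_sum fun i hi => mul_le_mul_of_nonneg_left ?_ (hw0 i hi)
    exact not_lt.1 (Finset.filter_eq_empty_iff.1 hempty hi)

variable {α : Type*} {𝓢 : Finset (Finset α)} {d : ℕ} {k : ℝ}

lemma sum_card_eq_sum_mul_card_slice (hd : ∀ A ∈ 𝓢, #A ≤ d) (w : ℕ → ℝ) :
    ∑ A ∈ 𝓢, w #A = ∑ i ∈ Finset.range (d + 1), w i * #(𝓢 # i) := by
  rw [← Finset.sum_fiberwise_of_maps_to fun A hA =>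
    Finset.mem_range.2 (Nat.lt_succ_of_le (hd A hA))]
  refine Finset.sum_congr rfl fun i _ => ?_
  rw [Finset.sum_congr rfl fun A hA => by rw [(Finset.mem_filter.1 hA).2],
    Finset.sum_const, nsmul_eq_mul, mul_comm, Finset.slice]

lemma shadow_slice_subset [DecidableEq α] (hlow : IsLowerSet (𝓢 : Set (Finset α))) (i : ℕ) :
    ∂ (𝓢 # (i + 1)) ⊆ 𝓢 # i := fun s hs => by
  have hcard : #s = i := Finset.sized_slice.shadow hs
  obtain ⟨t, ht, hst⟩ := Finset.exists_subset_of_mem_shadow hs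
  exact Finset.mem_slice.2 ⟨hlow hst (Finset.mem_slice.1 ht).1, hcard⟩

lemma card_slice_le_gchoose_of_le (hlow : IsLowerSet (𝓢 : Set (Finset α)))
    (hk : (d : ℝ) - 1 ≤ k) {i j : ℕ} (hi : 1 ≤ i) (hij : i ≤ j) (hj : j ≤ d)
    (h : #(𝓢 # i) ≤ gchoose k i) : #(𝓢 # j) ≤ gchoose k j := by
  classical
  induction j, hij using Nat.le_induction with
  | base => exact h
  | succ j hij ih =>
    have hjd : ((j + 1 : ℕ) : ℝ) ≤ d := Nat.cast_le.2 hj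
    push_cast at hjd
    refine card_le_gchoose_of_card_shadow_le (hi.trans hij) (by linarith) Finset.sized_slice ?_
    exact (Nat.cast_le.2 (Finset.card_le_card (shadow_slice_subset hlow j))).trans (ih (by omega))

lemma card_slice_zero (hlow : IsLowerSet (𝓢 : Set (Finset α))) (hne : 𝓢.Nonempty) :
    #(𝓢 # 0) = 1 := by
  obtain ⟨A, hA⟩ := hne
  refine Finset.card_eq_one.2 ⟨∅, Finset.ext fun B => ?_⟩
  simp only [Finset.mem_slice, Finset.card_eq_zero, Finset.mem_singleton, and_iff_right_iff_imp]
  rintro rfl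
  exact hlow A.empty_subset hA

theorem sum_mul_gchoose_le_sum_card (hlow : IsLowerSet (𝓢 : Set (Finset α)))
    (hd : ∀ A ∈ 𝓢, #A ≤ d) (hk : (d : ℝ) - 1 ≤ k)
    (hcard : ∑ i ∈ Finset.range (d + 1), gchoose k i ≤ #𝓢) {w : ℕ → ℝ}
    (hw : AntitoneOn w (Finset.range (d + 1))) (hw0 : ∀ i ∈ Finset.range (d + 1), 0 ≤ w i) :
    ∑ i ∈ Finset.range (d + 1), w i * gchoose k i ≤ ∑ A ∈ 𝓢, w #A := by
  have hne : 𝓢.Nonempty := by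
    have hnonneg : ∀ i ∈ Finset.range (d + 1), 0 ≤ gchoose k i := fun i hi =>
      gchoose_nonneg (hk.trans' (sub_le_sub_right
        (Nat.cast_le.2 (Nat.lt_succ_iff.1 (Finset.mem_range.1 hi))) 1))
    have h1 := (Finset.single_le_sum hnonneg (Finset.mem_range.2 d.succ_pos)).trans hcard
    rw [gchoose_zero, Nat.one_le_cast] at h1
    exact Finset.card_pos.1 h1
  rw [sum_card_eq_sum_mul_card_slice hd]
  refine sum_mul_le_sum_mul_of_single_crossing hw hw0 (fun i _ j hj hij hlt => ?_) ?_
  · have hi : 1 ≤ i := Nat.one_le_iff_ne_zero.2 fun h0 => by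
      rw [h0, card_slice_zero hlow hne, gchoose_zero, Nat.cast_one] at hlt
      exact lt_irrefl _ hlt
    exact card_slice_le_gchoose_of_le hlow hk hi hij.le
      (Nat.lt_succ_iff.1 (Finset.mem_range.1 hj)) hlt.le
  · have := sum_card_eq_sum_mul_card_slice hd fun _ => 1
    simp only [Finset.sum_const, nsmul_eq_mul, mul_one, one_mul] at this
    rwa [← this]

theorem sum_mul_gchoose_le_sum_card_filter (hlow : IsLowerSet (𝓢 : Set (Finset α)))
    (hd : ∀ A ∈ 𝓢, #A ≤ d) (hk : (d : ℝ) - 1 ≤ k)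
    (hcard : ∑ i ∈ Finset.range (d + 1), gchoose k i ≤ #𝓢) {w : ℕ → ℝ}
    (hw : AntitoneOn w (Finset.range d)) (hw0 : ∀ i ∈ Finset.range d, 0 ≤ w i) :
    ∑ i ∈ Finset.range d, w i * gchoose k i ≤ ∑ A ∈ 𝓢 with #A < d, w #A := by
  set w' : ℕ → ℝ := fun i => if i < d then w i else 0 with hw'
  have hw'0 (i : ℕ) : 0 ≤ w' i := by
    simp only [hw']
    split_ifs with hi
    exacts [hw0 i (Finset.mem_range.2 hi), le_rfl]
  have hanti : Antitone w' := fun i j hij => by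
    by_cases hj : j < d
    · simpa only [hw', hj, hij.trans_lt hj, if_true] using
        hw (Finset.mem_coe.2 (Finset.mem_range.2 (hij.trans_lt hj)))
          (Finset.mem_coe.2 (Finset.mem_range.2 hj)) hij
    · simpa only [hw', hj, if_false] using hw'0 i
  calc ∑ i ∈ Finset.range d, w i * gchoose k i
      = ∑ i ∈ Finset.range (d + 1), w' i * gchoose k i := by
        rw [Finset.sum_range_succ, show w' d = 0 from if_neg (lt_irrefl d), zero_mul, add_zero]
        exact Finset.sum_congr rfl fun i hi => by
          simp only [hw', if_pos (Finset.mem_range.1 hi)]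
    _ ≤ ∑ A ∈ 𝓢, w' #A :=
        sum_mul_gchoose_le_sum_card hlow hd hk hcard (hanti.antitoneOn _) fun i _ => hw'0 i
    _ = ∑ A ∈ 𝓢 with #A < d, w #A := (Finset.sum_filter _ _).symm

end WeightedSums

section StrongShattering

open scoped Finset FinsetFamily

variable {α : Type*} [DecidableEq α]

/-- `𝓔` strongly shatters `A` if `𝓔` contains a whole cube `{s ∪ t | t ⊆ A}` in the directions
of `A`. This is the notion dual to `Finset.Shatters`, and it bounds families from below. -/
def StronglyShatters (𝓔 : Finset (Finset α)) (A : Finset α) : Prop :=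
  ∃ s, Disjoint s A ∧ ∀ t ⊆ A, s ∪ t ∈ 𝓔

variable [Fintype α] {𝓔 : Finset (Finset α)} {A : Finset α}

lemma StronglyShatters.not_shatters_compl (h : StronglyShatters 𝓔 A) : ¬ 𝓔ᶜ.Shatters Aᶜ := by
  obtain ⟨s, hsA, hs⟩ := h
  intro hsh
  obtain ⟨u, hu, hAu⟩ := hsh (Finset.subset_compl_iff_disjoint_right.2 hsA)
  refine Finset.mem_compl.1 hu ?_
  have hsplit : s ∪ A ∩ u = u := by
    rw [← hAu, ← Finset.union_inter_distrib_right, Finset.union_comm, Finset.union_compl,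
      Finset.univ_inter]
  exact hsplit ▸ hs _ Finset.inter_subset_left

open Classical in
theorem card_filter_stronglyShatters_le (𝓔 : Finset (Finset α)) :
    #{A | StronglyShatters 𝓔 A} ≤ #𝓔 := by
  have hsub : ({A | StronglyShatters 𝓔 A} : Finset (Finset α)).image compl ⊆ 𝓔ᶜ.shattererᶜ := by
    refine Finset.image_subset_iff.2 fun A hA => ?_
    rw [Finset.mem_compl, Finset.mem_shatterer]
    exact (Finset.mem_filter.1 hA).2.not_shatters_compl
  have hcard := Finset.card_le_card hsub
  rw [Finset.card_image_of_injective _ compl_injective, Finset.card_compl] at hcard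
  have pajor := 𝓔ᶜ.card_le_card_shatterer
  rw [Finset.card_compl] at pajor
  have := 𝓔.card_le_univ
  omega

open Classical in
theorem sum_card_stronglyShatters_le {ι α : Type*} [Fintype ι] [Finite α] [DecidableEq α]
    (𝓢 : Finset (Finset α)) (𝓔 : ι → Finset (Finset α)) :
    ∑ A ∈ 𝓢, #{f | StronglyShatters (𝓔 f) A} ≤ ∑ f, #(𝓔 f) := by
  cases nonempty_fintype α
  calc ∑ A ∈ 𝓢, #{f | StronglyShatters (𝓔 f) A} = ∑ f, #{A ∈ 𝓢 | StronglyShatters (𝓔 f) A} :=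
        Finset.sum_card_bipartiteAbove_eq_sum_card_bipartiteBelow _
    _ ≤ ∑ f, #{A | StronglyShatters (𝓔 f) A} := by gcongr; exact Finset.subset_univ _
    _ ≤ ∑ f, #(𝓔 f) := Finset.sum_le_sum fun f _ => card_filter_stronglyShatters_le (𝓔 f)

end StrongShattering

section SignsAndConvexity

lemma eventually_sign_lineMap (a b : ℝ) :
    ∀ᶠ ε in 𝓝[>] (0 : ℝ), SignType.sign (AffineMap.lineMap a b ε : ℝ) =
      if a = 0 then SignType.sign b else SignType.sign a := by
  split_ifs with ha
  · filter_upwards [self_mem_nhdsWithin] with ε hε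
    rw [ha, AffineMap.lineMap_apply_ring, mul_zero, zero_add, sign_mul, sign_pos hε, one_mul]
  · have hcont : ContinuousAt (fun ε : ℝ => SignType.sign (AffineMap.lineMap a b ε : ℝ)) 0 :=
      ContinuousAt.comp (by simpa using continuousAt_sign_of_ne_zero ha)
        AffineMap.lineMap_continuous.continuousAt
    exact nhdsWithin_le_nhds <| hcont.eventually_mem <|
      (isOpen_discrete {SignType.sign a}).mem_nhds (by simp)

variable {E : Type*} [NormedAddCommGroup E] [NormedSpace ℝ E]

lemma eventually_lineMap_mem_of_mem_nhds {U : Set E} {x y : E} (hU : U ∈ 𝓝 x) :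
    ∀ᶠ ε in 𝓝[>] (0 : ℝ), AffineMap.lineMap x y ε ∈ U := by
  have := (AffineMap.lineMap_continuous (R := ℝ) (p := x) (q := y)).tendsto 0
  rw [AffineMap.lineMap_apply_zero] at this
  exact (this.mono_left nhdsWithin_le_nhds).eventually hU

theorem exists_mem_forall_ne_zero {ι : Type*} {K U : Set E} (hK : Convex ℝ K) (hU : IsOpen U)
    (hne : (K ∩ U).Nonempty) (I : Finset ι) (φ : ι → E →ᵃ[ℝ] ℝ)
    (hφ : ∀ i ∈ I, ∃ z ∈ K, φ i z ≠ 0) : ∃ x ∈ K ∩ U, ∀ i ∈ I, φ i x ≠ 0 := by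
  classical
  induction I using Finset.induction_on with
  | empty => exact hne.imp fun x hx => ⟨hx, by simp⟩
  | insert i I _ ih =>
    obtain ⟨x, ⟨hxK, hxU⟩, hx⟩ := ih fun j hj => hφ j (Finset.mem_insert_of_mem hj)
    obtain ⟨z, hzK, hz⟩ := hφ i (Finset.mem_insert_self i I)
    have hsign : ∀ j ∈ insert i I, ∀ᶠ ε in 𝓝[>] (0 : ℝ), φ j (AffineMap.lineMap x z ε) ≠ 0 := by
      intro j hj
      filter_upwards [eventually_sign_lineMap (φ j x) (φ j z)] with ε hε
      rw [AffineMap.apply_lineMap, ← sign_ne_zero, hε]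
      split_ifs with h0
      · obtain rfl : j = i := (Finset.mem_insert.1 hj).resolve_right fun hjI => hx j hjI h0
        exact sign_ne_zero.2 hz
      · exact sign_ne_zero.2 h0
    obtain ⟨ε, hε, hεU, hε1⟩ := ((Filter.eventually_all_finset _).2 hsign |>.and
      ((eventually_lineMap_mem_of_mem_nhds (hU.mem_nhds hxU)).and (Ioo_mem_nhdsGT one_pos))).exists
    exact ⟨_, ⟨hK.lineMap_mem hxK hzK ⟨hε1.1.le, hε1.2.le⟩, hεU⟩, hε⟩

theorem exists_mem_forall_eq_zero {ι : Type*} {T : Set E} (hT : Convex ℝ T) (A : Finset ι)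
    (φ : ι → E →ᵃ[ℝ] ℝ)
    (hφ : ∀ t ⊆ A, ∃ x ∈ T, (∀ a ∈ t, 0 < φ a x) ∧ ∀ a ∈ A, a ∉ t → φ a x < 0) :
    ∃ x ∈ T, ∀ a ∈ A, φ a x = 0 := by
  classical
  induction A using Finset.induction_on generalizing T with
  | empty => exact (hφ ∅ subset_rfl).imp fun x hx => ⟨hx.1, by simp⟩
  | insert a A ha ih =>
    obtain ⟨x, ⟨hxT, hx⟩, hxA⟩ := ih (T := T ∩ φ a ⁻¹' Ioi 0)
      (hT.inter ((convex_Ioi 0).affine_preimage _)) fun t ht => by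
        obtain ⟨x, hxT, hpos, hneg⟩ := hφ (insert a t) (Finset.insert_subset_insert a ht)
        refine ⟨x, ⟨hxT, hpos a (Finset.mem_insert_self a t)⟩,
          fun b hb => hpos b (Finset.mem_insert_of_mem hb), fun b hb hbt => ?_⟩
        exact hneg b (Finset.mem_insert_of_mem hb) <| by
          simpa [hbt] using (ne_of_mem_of_not_mem hb ha)
    obtain ⟨y, ⟨hyT, hy⟩, hyA⟩ := ih (T := T ∩ φ a ⁻¹' Iio 0)
      (hT.inter ((convex_Iio 0).affine_preimage _)) fun t ht => by
        obtain ⟨x, hxT, hpos, hneg⟩ := hφ t (ht.trans (Finset.subset_insert a A))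
        exact ⟨x, ⟨hxT, hneg a (Finset.mem_insert_self a A) fun h => ha (ht h)⟩, hpos,
          fun b hb => hneg b (Finset.mem_insert_of_mem hb)⟩
    have hzero : Convex ℝ (T ∩ ⋂ b ∈ A, φ b ⁻¹' {0}) :=
      hT.inter (convex_iInter₂ fun b _ => (convex_singleton 0).affine_preimage _)
    obtain ⟨z, ⟨hzT, hzA⟩, hz⟩ := (hzero.affine_image (φ a)).ordConnected.out
      (mem_image_of_mem _ ⟨hyT, mem_iInter₂.2 hyA⟩) (mem_image_of_mem _ ⟨hxT, mem_iInter₂.2 hxA⟩)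
      ⟨hy.le, hx.le⟩
    exact ⟨z, hzT, (Finset.forall_mem_insert a A _).2 ⟨hz, fun b hb => mem_iInter₂.1 hzA b hb⟩⟩

theorem exists_first_exit {T : Set E} (hT : IsOpen T) (hbdd : Bornology.IsBounded T)
    {p y : E} (hp : p ∈ T) (hy : y ≠ p) : ∃ τ : ℝ, 0 < τ ∧ AffineMap.lineMap p y τ ∉ T ∧
      ∀ t ∈ Ico 0 τ, AffineMap.lineMap p y t ∈ T := by
  set ray : Set ℝ := {t | 0 ≤ t ∧ AffineMap.lineMap p y t ∉ T}
  have hclosed : IsClosed ray :=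
    isClosed_Ici.inter (hT.isClosed_compl.preimage AffineMap.lineMap_continuous)
  have hne : ray.Nonempty := by
    obtain ⟨r, hr, hT⟩ := hbdd.subset_ball_lt 0 p
    have hdist : 0 < dist p y := dist_pos.2 hy.symm
    refine ⟨r / dist p y, by positivity, fun h => (Metric.mem_ball'.1 (hT h)).ne ?_⟩
    rw [dist_left_lineMap, Real.norm_of_nonneg (by positivity), div_mul_cancel₀ _ hdist.ne']
  obtain ⟨⟨h0, hτ⟩, hleast⟩ := hclosed.isLeast_csInf hne ⟨0, fun t ht => ht.1⟩
  refine ⟨_, h0.lt_of_ne' fun h => hτ ?_, hτ, fun t ht => ?_⟩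
  · rwa [h, AffineMap.lineMap_apply_zero]
  · by_contra h
    exact ht.2.not_ge (hleast ⟨ht.1, h⟩)

end SignsAndConvexity

namespace Arrangement

section Chambers

open scoped Finset

variable {d n : ℕ} (𝓗 : Arrangement d n) {S : Set (Set (Fin d → ℝ))} {x y : Fin d → ℝ}
  {i : Fin n} {A : Finset (Fin n)}

/-- The affine form `x ↦ ⟨normal i, x⟩ - offset i`, whose zero set is the `i`-th hyperplane. -/
def form (i : Fin n) : (Fin d → ℝ) →ᵃ[ℝ] ℝ :=
  (∑ j, 𝓗.normal i j • LinearMap.proj j : (Fin d → ℝ) →ₗ[ℝ] ℝ).toAffineMap -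
    AffineMap.const ℝ _ (𝓗.offset i)

lemma form_apply (i : Fin n) (x : Fin d → ℝ) :
    𝓗.form i x = ∑ j, 𝓗.normal i j * x j - 𝓗.offset i := by
  simp [form]

lemma continuous_form (i : Fin n) : Continuous (𝓗.form i) :=
  (𝓗.form i).continuous_of_finiteDimensional

lemma mem_H : x ∈ 𝓗.H i ↔ 𝓗.form i x = 0 := by
  rw [form_apply, sub_eq_zero]; rfl

lemma mem_pos : x ∈ 𝓗.pos i ↔ 0 < 𝓗.form i x := by
  rw [form_apply, sub_pos]; rfl

lemma mem_neg : x ∈ 𝓗.neg i ↔ 𝓗.form i x < 0 := by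
  rw [form_apply, sub_neg]; rfl

lemma mem_free : x ∈ 𝓗.free ↔ ∀ i, 𝓗.form i x ≠ 0 :=
  forall_congr' fun _ => 𝓗.mem_H.not

/-- The flat `L_A`, the intersection of the hyperplanes indexed by `A`. -/
def flat (A : Finset (Fin n)) : Set (Fin d → ℝ) := ⋂ i ∈ A, 𝓗.H i

lemma mem_flat : x ∈ 𝓗.flat A ↔ ∀ a ∈ A, 𝓗.form a x = 0 := by
  simp only [flat, mem_iInter, mem_H]

lemma convex_flat (A : Finset (Fin n)) : Convex ℝ (𝓗.flat A) := by
  have : 𝓗.flat A = ⋂ a ∈ A, 𝓗.form a ⁻¹' {0} := by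
    ext
    simp [mem_flat]
  exact this ▸ convex_iInter₂ fun a _ => (convex_singleton 0).affine_preimage _

/-- The chamber containing the point `x`; it is empty when `x` lies on a hyperplane. -/
def chamberOf (x : Fin d → ℝ) : Set (Fin d → ℝ) := connectedComponentIn 𝓗.free x

lemma isOpen_free : IsOpen 𝓗.free := by
  have : 𝓗.free = ⋂ i, {x | 𝓗.form i x ≠ 0} := by
    ext
    simp [mem_free]
  exact this ▸ isOpen_iInter_of_finite fun i => isOpen_ne_fun (𝓗.continuous_form i) continuous_const

lemma mem_free_of_sign_eq (hx : x ∈ 𝓗.free)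
    (h : ∀ i, SignType.sign (𝓗.form i y) = SignType.sign (𝓗.form i x)) : y ∈ 𝓗.free :=
  𝓗.mem_free.2 fun i => sign_ne_zero.1 ((h i).trans_ne (sign_ne_zero.2 (𝓗.mem_free.1 hx i)))

lemma mem_chamberOf_iff (hx : x ∈ 𝓗.free) : y ∈ 𝓗.chamberOf x ↔
    ∀ i, SignType.sign (𝓗.form i y) = SignType.sign (𝓗.form i x) := by
  refine ⟨fun hy i => ?_, fun h => ?_⟩
  · refine isPreconnected_connectedComponentIn.constant
      (f := fun z => SignType.sign (𝓗.form i z)) (fun z hz => ?_) hy (mem_connectedComponentIn hx)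
    have hz : 𝓗.form i z ≠ 0 := 𝓗.mem_free.1 (connectedComponentIn_subset _ _ hz) i
    exact ((continuousAt_sign_of_ne_zero hz).comp
      (𝓗.continuous_form i).continuousAt).continuousWithinAt
  · set cell := ⋂ i, 𝓗.form i ⁻¹' (SignType.sign ⁻¹' {SignType.sign (𝓗.form i x)})
    have hconv : Convex ℝ cell :=
      convex_iInter fun i =>
        (ordConnected_singleton.preimage_mono SignType.sign.monotone).convex.affine_preimage _
    have hsub : cell ⊆ 𝓗.free := fun z hz => 𝓗.mem_free_of_sign_eq hx (mem_iInter.1 hz)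
    exact hconv.isPreconnected.subset_connectedComponentIn (mem_iInter.2 fun i => rfl) hsub
      (mem_iInter.2 h)

lemma chamberOf_eq (hx : x ∈ 𝓗.free)
    (h : ∀ i, SignType.sign (𝓗.form i y) = SignType.sign (𝓗.form i x)) :
    𝓗.chamberOf y = 𝓗.chamberOf x :=
  (connectedComponentIn_eq ((𝓗.mem_chamberOf_iff hx).2 h)).symm

lemma mem_thickening_iff (hS : S ⊆ 𝓗.chambers) (hx : x ∈ 𝓗.free) :
    x ∈ thickening S ↔ 𝓗.chamberOf x ∈ S := by
  have hopen : IsOpen (𝓗.chamberOf x) := 𝓗.isOpen_free.connectedComponentIn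
  have hmem : x ∈ 𝓗.chamberOf x := mem_connectedComponentIn hx
  refine ⟨fun h => ?_, fun h => ?_⟩
  · obtain ⟨z, hzx, hz⟩ := mem_closure_iff.1 (interior_subset h) _ hopen hmem
    obtain ⟨C, hC, hzC⟩ := mem_iUnion₂.1 hz
    obtain ⟨w, -, rfl⟩ := hS hC
    rwa [chamberOf, connectedComponentIn_eq hzx, ← connectedComponentIn_eq hzC]
  · exact interior_maximal ((subset_biUnion_of_mem h).trans subset_closure) hopen hmem

/-- A set is saturated if it is a union of chambers away from the hyperplanes. -/
def Saturated (T : Set (Fin d → ℝ)) : Prop :=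
  ∀ ⦃x⦄, x ∈ T → x ∈ 𝓗.free →
    ∀ ⦃y⦄, (∀ i, SignType.sign (𝓗.form i y) = SignType.sign (𝓗.form i x)) → y ∈ T

lemma saturated_thickening (hS : S ⊆ 𝓗.chambers) : 𝓗.Saturated (thickening S) :=
  fun x hxT hx y h => by
    rwa [𝓗.mem_thickening_iff hS (𝓗.mem_free_of_sign_eq hx h), 𝓗.chamberOf_eq hx h,
      ← 𝓗.mem_thickening_iff hS hx]

lemma chamberOf_subset_pos_iff (hx : x ∈ 𝓗.free) :
    𝓗.chamberOf x ⊆ 𝓗.pos i ↔ 0 < 𝓗.form i x := by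
  refine ⟨fun h => 𝓗.mem_pos.1 (h (mem_connectedComponentIn hx)), fun h y hy => ?_⟩
  rw [mem_pos, ← sign_eq_one_iff, (𝓗.mem_chamberOf_iff hx).1 hy i, sign_pos h]

lemma chamberOf_subset_neg_iff (hx : x ∈ 𝓗.free) :
    𝓗.chamberOf x ⊆ 𝓗.neg i ↔ 𝓗.form i x < 0 := by
  refine ⟨fun h => 𝓗.mem_neg.1 (h (mem_connectedComponentIn hx)), fun h y hy => ?_⟩
  rw [mem_neg, ← sign_eq_neg_one_iff, (𝓗.mem_chamberOf_iff hx).1 hy i, sign_neg h]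

lemma separates_chamberOf_iff (hx : x ∈ 𝓗.free) (hy : y ∈ 𝓗.free) :
    𝓗.Separates i (𝓗.chamberOf x) (𝓗.chamberOf y) ↔
      SignType.sign (𝓗.form i x) ≠ SignType.sign (𝓗.form i y) := by
  rw [Separates, 𝓗.chamberOf_subset_pos_iff hx, 𝓗.chamberOf_subset_pos_iff hy,
    𝓗.chamberOf_subset_neg_iff hx, 𝓗.chamberOf_subset_neg_iff hy]
  rcases (𝓗.mem_free.1 hx i).lt_or_gt with hxi | hxi <;>
    rcases (𝓗.mem_free.1 hy i).lt_or_gt with hyi | hyi <;>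
    simp [hxi, hyi, hxi.not_gt, hyi.not_gt]

open Classical in
/-- The hyperplanes having `C` on their positive side; for a chamber this encodes its sign
vector. -/
def posSet (C : Set (Fin d → ℝ)) : Finset (Fin n) := {i | C ⊆ 𝓗.pos i}

lemma mem_posSet_chamberOf (hx : x ∈ 𝓗.free) :
    i ∈ 𝓗.posSet (𝓗.chamberOf x) ↔ 0 < 𝓗.form i x := by
  simp [posSet, 𝓗.chamberOf_subset_pos_iff hx]

lemma notMem_posSet_chamberOf (hx : x ∈ 𝓗.free) :
    i ∉ 𝓗.posSet (𝓗.chamberOf x) ↔ 𝓗.form i x < 0 := by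
  rw [𝓗.mem_posSet_chamberOf hx, not_lt, (𝓗.mem_free.1 hx i).le_iff_lt]

lemma injOn_posSet : InjOn 𝓗.posSet 𝓗.chambers := by
  rintro _ ⟨x, hx, rfl⟩ _ ⟨y, hy, rfl⟩ h
  refine 𝓗.chamberOf_eq hy fun i => ?_
  have hi := Finset.ext_iff.1 h i
  by_cases hxi : i ∈ 𝓗.posSet (𝓗.chamberOf x)
  · rw [sign_pos ((𝓗.mem_posSet_chamberOf hx).1 hxi),
      sign_pos ((𝓗.mem_posSet_chamberOf hy).1 (hi.1 hxi))]
  · rw [sign_neg ((𝓗.notMem_posSet_chamberOf hx).1 hxi),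
      sign_neg ((𝓗.notMem_posSet_chamberOf hy).1 (hi.not.1 hxi))]

lemma finite_chambers : 𝓗.chambers.Finite :=
  finite_univ.of_injOn (mapsTo_univ _ _) 𝓗.injOn_posSet

lemma finite_edgeBoundary (S : Set (Set (Fin d → ℝ))) : (𝓗.edgeBoundary S).Finite :=
  (𝓗.finite_chambers.prod 𝓗.finite_chambers).subset fun _ h => ⟨h.2.2.1, h.2.2.2.1⟩

end Chambers

section Support

open scoped Finset

variable {d n : ℕ} (𝓗 : Arrangement d n) {S : Set (Set (Fin d → ℝ))} {x y : Fin d → ℝ}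
  {f : Fin n} {A : Finset (Fin n)}

lemma isLowerSet_supp (S : Set (Set (Fin d → ℝ))) : IsLowerSet (𝓗.supp S) :=
  fun _ _ hBA => Nonempty.mono <| inter_subset_inter_right _ <| biInter_subset_biInter_left hBA

lemma card_le_of_mem_supp (hgp : 𝓗.GeneralPosition) (hA : A ∈ 𝓗.supp S) : #A ≤ d := by
  by_contra! hlt
  obtain ⟨B, hBA, hB⟩ := Finset.exists_subset_card_eq (Nat.succ_le_of_lt hlt)
  obtain ⟨x, -, hx⟩ := 𝓗.isLowerSet_supp S hBA hA
  exact (hgp.2 B hB).subset hx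

theorem ncard_le_ncard_supp (hS : S ⊆ 𝓗.chambers) (hconv : Convex ℝ (thickening S)) :
    S.ncard ≤ (𝓗.supp S).ncard := by
  classical
  set signs := ((𝓗.finite_chambers.subset hS).image 𝓗.posSet).toFinset
  calc S.ncard = #signs := by
        rw [← ncard_eq_toFinset_card _, (𝓗.injOn_posSet.mono hS).ncard_image]
    _ ≤ #signs.shatterer := signs.card_le_card_shatterer
    _ = (signs.shatterer : Set (Finset (Fin n))).ncard := (ncard_coe_finset _).symm
    _ ≤ (𝓗.supp S).ncard := ncard_le_ncard fun A hA => ?_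
  obtain ⟨x, hxT, hx⟩ := exists_mem_forall_eq_zero hconv A 𝓗.form fun t ht => by
    obtain ⟨u, hu, rfl⟩ := Finset.mem_shatterer.1 (Finset.mem_coe.1 hA) ht
    obtain ⟨C, hC, rfl⟩ := (Finite.mem_toFinset _).1 hu
    obtain ⟨x, hx, rfl⟩ := hS hC
    refine ⟨x, (𝓗.mem_thickening_iff hS hx).2 hC, fun a ha => ?_, fun a ha hat => ?_⟩
    · exact (𝓗.mem_posSet_chamberOf hx).1 (Finset.mem_inter.1 ha).2
    · exact (𝓗.notMem_posSet_chamberOf hx).1 fun h => hat (Finset.mem_inter.2 ⟨ha, h⟩)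
  exact ⟨x, hxT, 𝓗.mem_flat.2 hx⟩

open Classical in
/-- The boundary edges of `S` crossing the hyperplane `f`, each recorded as the sign vector that
its two ends share away from `f`. -/
def crossings (S : Set (Set (Fin d → ℝ))) (f : Fin n) : Finset (Finset (Fin n)) :=
  {s | ∃ e ∈ 𝓗.edgeBoundary S, 𝓗.Separates f e.1 e.2 ∧ (𝓗.posSet e.1).erase f = s}

theorem sum_card_crossings_le (S : Set (Set (Fin d → ℝ))) :
    ∑ f, #(𝓗.crossings S f) ≤ (𝓗.edgeBoundary S).ncard := by
  classical
  set edges := (𝓗.finite_edgeBoundary S).toFinset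
  calc ∑ f, #(𝓗.crossings S f) ≤ ∑ f, #{e ∈ edges | 𝓗.Separates f e.1 e.2} := by
        refine Finset.sum_le_sum fun f _ => Finset.card_le_card_of_surjOn
          (fun e => (𝓗.posSet e.1).erase f) fun s hs => ?_
        obtain ⟨e, he, hsep, rfl⟩ := (Finset.mem_filter.1 (Finset.mem_coe.1 hs)).2
        exact ⟨e, by simpa [edges] using ⟨he, hsep⟩, rfl⟩
    _ = ∑ e ∈ edges, #{f | 𝓗.Separates f e.1 e.2} :=
        Finset.sum_card_bipartiteAbove_eq_sum_card_bipartiteBelow _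
    _ = ∑ e ∈ edges, 1 := Finset.sum_congr rfl fun e he => by
        obtain ⟨-, -, -, -, f, hf, hunique⟩ := (Finite.mem_toFinset _).1 he
        exact Finset.card_eq_one.2 ⟨f, by ext g; simpa using ⟨hunique g, fun h => h ▸ hf⟩⟩
    _ = (𝓗.edgeBoundary S).ncard := by
        rw [← Finset.card_eq_sum_ones, ncard_eq_toFinset_card _ (𝓗.finite_edgeBoundary S)]

lemma erase_posSet_mem_crossings (hS : S ⊆ 𝓗.chambers) (hx : x ∈ 𝓗.free) (hy : y ∈ 𝓗.free)
    (hxT : x ∈ thickening S) (hyT : y ∉ thickening S)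
    (h : ∀ i ≠ f, SignType.sign (𝓗.form i x) = SignType.sign (𝓗.form i y)) :
    (𝓗.posSet (𝓗.chamberOf x)).erase f ∈ 𝓗.crossings S f := by
  have hf : SignType.sign (𝓗.form f x) ≠ SignType.sign (𝓗.form f y) := fun hf =>
    hyT <| 𝓗.saturated_thickening hS hxT hx fun i => by
      obtain rfl | hif := eq_or_ne i f
      exacts [hf.symm, (h i hif).symm]
  have hsep : 𝓗.Separates f (𝓗.chamberOf x) (𝓗.chamberOf y) :=
    (𝓗.separates_chamberOf_iff hx hy).2 hf
  simp only [crossings, Finset.mem_filter_univ]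
  refine ⟨(𝓗.chamberOf x, 𝓗.chamberOf y), ⟨?_, ?_, ⟨x, hx, rfl⟩, ⟨y, hy, rfl⟩, f, hsep, ?_⟩,
    hsep, rfl⟩
  · exact (𝓗.mem_thickening_iff hS hx).1 hxT
  · exact fun hC => hyT ((𝓗.mem_thickening_iff hS hy).2 hC)
  · exact fun g hg => by_contra fun hgf => (𝓗.separates_chamberOf_iff hx hy).1 hg (h g hgf)

end Support

section GeneralPosition

open scoped Finset

variable {d n : ℕ} {𝓗 : Arrangement d n} {A C : Finset (Fin n)} {p : Fin d → ℝ}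

lemma exists_form_eq (hgp : 𝓗.GeneralPosition) (hA : #A ≤ d) (c : Fin n → ℝ) :
    ∃ x, ∀ a ∈ A, 𝓗.form a x = c a := by
  set M : Matrix A (Fin d) ℝ := Matrix.of fun a => 𝓗.normal a
  have hsurj : LinearMap.range M.mulVecLin = ⊤ := by
    apply Submodule.eq_top_of_finrank_eq
    rw [← Matrix.rank, LinearIndependent.rank_matrix (M := M) (hgp.1 A hA),
      Module.finrank_fintype_fun_eq_card]
  obtain ⟨x, hx⟩ := LinearMap.range_eq_top.1 hsurj fun a => c a + 𝓗.offset a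
  refine ⟨x, fun a ha => ?_⟩
  rw [form_apply, sub_eq_iff_eq_add]
  exact congrFun hx ⟨a, ha⟩

lemma exists_mem_flat_form_ne_zero (hgp : 𝓗.GeneralPosition) (hA : #A ≤ d) {g : Fin n}
    (hg : g ∉ A) : ∃ x ∈ 𝓗.flat A, 𝓗.form g x ≠ 0 := by
  obtain hlt | heq := hA.lt_or_eq
  · obtain ⟨x, hx⟩ := exists_form_eq hgp (A := insert g A)
      ((Finset.card_insert_of_notMem hg).trans_le hlt) (Pi.single g 1)
    refine ⟨x, 𝓗.mem_flat.2 fun a ha => ?_, ?_⟩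
    · rw [hx a (Finset.mem_insert_of_mem ha), Pi.single_eq_of_ne (ne_of_mem_of_not_mem ha hg)]
    · rw [hx g (Finset.mem_insert_self g A), Pi.single_eq_same]
      exact one_ne_zero
  · obtain ⟨x, hx⟩ := exists_form_eq hgp hA 0
    refine ⟨x, 𝓗.mem_flat.2 hx, fun h => ?_⟩
    have hmem : x ∈ 𝓗.flat (insert g A) :=
      𝓗.mem_flat.2 ((Finset.forall_mem_insert g A _).2 ⟨h, hx⟩)
    rwa [flat, hgp.2 _ (by rw [Finset.card_insert_of_notMem hg, heq])] at hmem

lemma exists_ne_forall_form_eq (𝓗 : Arrangement d n) (hA : #A < d) (p : Fin d → ℝ) :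
    ∃ y ≠ p, ∀ a ∈ A, 𝓗.form a y = 𝓗.form a p := by
  set Φ : (Fin d → ℝ) →ₗ[ℝ] (A → ℝ) := LinearMap.pi fun a => (𝓗.form a).linear
  obtain ⟨v, hv, hv0⟩ := Submodule.exists_mem_ne_zero_of_ne_bot
    (LinearMap.ker_ne_bot_of_finrank_lt (f := Φ) (by simpa using hA))
  refine ⟨v +ᵥ p, by simpa using hv0, fun a ha => ?_⟩
  rw [AffineMap.map_vadd, show (𝓗.form a).linear v = 0 from congrFun hv ⟨a, ha⟩, zero_vadd]

lemma exists_mem_flat_forall_form_ne_zero (hgp : 𝓗.GeneralPosition) (hA : #A ≤ d)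
    {U : Set (Fin d → ℝ)} (hU : IsOpen U) (hne : (𝓗.flat A ∩ U).Nonempty) :
    ∃ p ∈ 𝓗.flat A ∩ U, ∀ f ∉ A, 𝓗.form f p ≠ 0 := by
  simpa using exists_mem_forall_ne_zero (𝓗.convex_flat A) hU hne Aᶜ 𝓗.form fun g hg =>
    exists_mem_flat_form_ne_zero hgp hA (Finset.mem_compl.1 hg)

lemma exists_mem_flat_form_receding (hgp : 𝓗.GeneralPosition) (hA : #A < d) (hAC : A ⊆ C)
    (hC : #C ≤ d) (hpA : p ∈ 𝓗.flat A) (hp : ∀ f ∉ A, 𝓗.form f p ≠ 0) :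
    ∃ y ∈ 𝓗.flat A, y ≠ p ∧ ∀ b ∈ C \ A, 0 < 𝓗.form b p * (𝓗.form b y - 𝓗.form b p) := by
  obtain rfl | hne := eq_or_ne A C
  · obtain ⟨y, hy, hyA⟩ := 𝓗.exists_ne_forall_form_eq hA p
    exact ⟨y, 𝓗.mem_flat.2 fun a ha => (hyA a ha).trans (𝓗.mem_flat.1 hpA a ha), hy, by simp⟩
  obtain ⟨z, hz⟩ := exists_form_eq hgp hC 0
  have hform (i : Fin n) (hi : i ∈ C) : 𝓗.form i (AffineMap.lineMap z p (2 : ℝ)) =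
      2 * 𝓗.form i p := by
    rw [AffineMap.apply_lineMap, hz i hi, Pi.zero_apply, AffineMap.lineMap_apply_ring, mul_zero,
      zero_add]
  have hpos : ∀ b ∈ C \ A, 0 < 𝓗.form b p *
      (𝓗.form b (AffineMap.lineMap z p (2 : ℝ)) - 𝓗.form b p) := fun b hb => by
    rw [Finset.mem_sdiff] at hb
    rw [hform b hb.1, two_mul, add_sub_cancel_right]
    exact mul_self_pos.2 (hp b hb.2)
  refine ⟨_, 𝓗.mem_flat.2 fun a ha => ?_, fun h => ?_, hpos⟩
  · rw [hform a (hAC ha), 𝓗.mem_flat.1 hpA a ha, mul_zero]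
  · obtain ⟨b, hbC, hbA⟩ := Finset.exists_of_ssubset (hAC.ssubset_of_ne hne)
    simpa [h] using hpos b (Finset.mem_sdiff.2 ⟨hbC, hbA⟩)

/-- The last condition says that the line from `p` to `y` meets no two hyperplanes at once. -/
lemma exists_generic_mem_flat_form_receding (hgp : 𝓗.GeneralPosition) (hA : #A < d)
    (hAC : A ⊆ C) (hC : #C ≤ d) (hpA : p ∈ 𝓗.flat A) (hp : ∀ f ∉ A, 𝓗.form f p ≠ 0) :
    ∃ y ∈ 𝓗.flat A, y ≠ p ∧ (∀ b ∈ C \ A, 0 < 𝓗.form b p * (𝓗.form b y - 𝓗.form b p)) ∧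
      ∀ f ∉ A, ∀ g ∉ A, f ≠ g → 𝓗.form f p * 𝓗.form g y ≠ 𝓗.form g p * 𝓗.form f y := by
  set U := {p}ᶜ ∩ ⋂ b ∈ C \ A, {y | 0 < 𝓗.form b p * (𝓗.form b y - 𝓗.form b p)}
  have hU : IsOpen U := isOpen_compl_singleton.inter <| isOpen_biInter_finset fun b _ =>
    isOpen_lt continuous_const
      (continuous_const.mul ((𝓗.continuous_form b).sub continuous_const))
  have hne : (𝓗.flat A ∩ U).Nonempty := by
    obtain ⟨y, hyA, hyp, hy⟩ := exists_mem_flat_form_receding hgp hA hAC hC hpA hp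
    exact ⟨y, hyA, hyp, mem_iInter₂.2 hy⟩
  obtain ⟨y, ⟨hyA, hyp, hyC⟩, hy⟩ := exists_mem_forall_ne_zero (𝓗.convex_flat A) hU hne
    Aᶜ.offDiag (fun e => 𝓗.form e.1 p • 𝓗.form e.2 - 𝓗.form e.2 p • 𝓗.form e.1) <| by
      rintro ⟨f, g⟩ he
      obtain ⟨hf, hg, hfg⟩ := Finset.mem_offDiag.1 he
      rw [Finset.mem_compl] at hf hg
      obtain ⟨x, hx, hxg⟩ := exists_mem_flat_form_ne_zero hgp (A := insert f A) (g := g)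
        ((Finset.card_insert_of_notMem hf).trans_le hA) (by simp [hg, Ne.symm hfg])
      have hxA := (Finset.forall_mem_insert f A _).1 (𝓗.mem_flat.1 hx)
      exact ⟨x, 𝓗.mem_flat.2 hxA.2, by simp [hxA.1, hxg, hp f hf]⟩
  refine ⟨y, hyA, hyp, mem_iInter₂.1 hyC, fun f hf g hg hfg h => ?_⟩
  exact hy (f, g) (by simp [hf, hg, hfg]) (by simp [h])

end GeneralPosition

section Facets

open scoped Finset

variable {d n : ℕ} {𝓗 : Arrangement d n} {T : Set (Fin d → ℝ)} {A C : Finset (Fin n)}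
  {p q y z : Fin d → ℝ}

lemma eventually_sign_form_lineMap (𝓗 : Arrangement d n) (q z : Fin d → ℝ) :
    ∀ᶠ ε in 𝓝[>] (0 : ℝ), ∀ i, SignType.sign (𝓗.form i (AffineMap.lineMap q z ε)) =
      if 𝓗.form i q = 0 then SignType.sign (𝓗.form i z) else SignType.sign (𝓗.form i q) :=
  Filter.eventually_all.2 fun i => by
    simpa only [AffineMap.apply_lineMap] using eventually_sign_lineMap (𝓗.form i q) (𝓗.form i z)

lemma eventually_lineMap_mem_free (hz : ∀ i, 𝓗.form i q = 0 → 𝓗.form i z ≠ 0) :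
    ∀ᶠ ε in 𝓝[>] (0 : ℝ), AffineMap.lineMap q z ε ∈ 𝓗.free := by
  filter_upwards [𝓗.eventually_sign_form_lineMap q z] with ε hε
  refine 𝓗.mem_free.2 fun i => sign_ne_zero.1 ?_
  rw [hε i]
  split_ifs with h0
  exacts [sign_ne_zero.2 (hz i h0), sign_ne_zero.2 h0]

lemma Saturated.eventually_lineMap_mem (hsat : 𝓗.Saturated T) (hT : IsOpen T)
    (hqp : ∀ᶠ ε in 𝓝[>] (0 : ℝ), AffineMap.lineMap q p ε ∈ T)
    (hz : ∀ i, 𝓗.form i q = 0 → 𝓗.form i z ≠ 0)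
    (hzp : ∀ i, 𝓗.form i q = 0 → 𝓗.form i p ≠ 0 →
      SignType.sign (𝓗.form i z) = SignType.sign (𝓗.form i p)) :
    ∀ᶠ ε in 𝓝[>] (0 : ℝ), AffineMap.lineMap q z ε ∈ T := by
  obtain ⟨δ, hδT, hδ⟩ := (hqp.and (𝓗.eventually_sign_form_lineMap q p)).exists
  set m := AffineMap.lineMap q p δ
  obtain ⟨η, hηT, hη⟩ := ((eventually_lineMap_mem_of_mem_nhds (hT.mem_nhds hδT) (y := z)).and
    (𝓗.eventually_sign_form_lineMap m z)).exists
  have hsign (i : Fin n) : SignType.sign (𝓗.form i (AffineMap.lineMap m z η)) =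
      if 𝓗.form i q = 0 then SignType.sign (𝓗.form i z) else SignType.sign (𝓗.form i q) := by
    simp only [hη i, ← sign_eq_zero_iff (a := 𝓗.form i m), hδ i]
    by_cases hq : 𝓗.form i q = 0
    · by_cases hp : 𝓗.form i p = 0
      · simp [hq, hp]
      · simp [hq, hp, hzp i hq hp]
    · simp [hq]
  filter_upwards [𝓗.eventually_sign_form_lineMap q z, eventually_lineMap_mem_free hz]
    with ε hε hfree
  have heq (i : Fin n) := (hε i).trans (hsign i).symm
  exact hsat hηT (𝓗.mem_free_of_sign_eq hfree fun i => (heq i).symm) heq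

lemma Saturated.eventually_lineMap_notMem (hsat : 𝓗.Saturated T) (hT : IsOpen T)
    (hconv : Convex ℝ T) (hq : q ∉ T)
    (hqp : ∀ᶠ ε in 𝓝[>] (0 : ℝ), AffineMap.lineMap q p ε ∈ T)
    (hz : ∀ i, 𝓗.form i q = 0 → 𝓗.form i z ≠ 0)
    (hzp : ∀ i, 𝓗.form i q = 0 → 𝓗.form i p ≠ 0 →
      SignType.sign (𝓗.form i z) = -SignType.sign (𝓗.form i p)) :
    ∀ᶠ ε in 𝓝[>] (0 : ℝ), AffineMap.lineMap q z ε ∉ T := by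
  set z' := AffineMap.lineMap q z (-1 : ℝ)
  have hform (i : Fin n) (hi : 𝓗.form i q = 0) : 𝓗.form i z' = -𝓗.form i z := by
    rw [AffineMap.apply_lineMap, hi, AffineMap.lineMap_apply_ring]
    ring
  have hz'T : ∀ᶠ ε in 𝓝[>] (0 : ℝ), AffineMap.lineMap q z' ε ∈ T :=
    hsat.eventually_lineMap_mem hT hqp
      (fun i hi => by rw [hform i hi]; exact neg_ne_zero.2 (hz i hi))
      (fun i hi hpi => by rw [hform i hi, Left.sign_neg, hzp i hi hpi, neg_neg])
  filter_upwards [hz'T] with ε hreflected hmem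
  -- `q` is the midpoint of the points at parameter `ε` on the rays towards `z` and its reflection.
  refine hq ?_
  have := hconv.lineMap_mem hmem hreflected (t := 1 / 2) (by norm_num)
  convert this using 1
  ext j
  simp only [z', AffineMap.lineMap_apply, vsub_eq_sub, vadd_eq_add, Pi.add_apply, Pi.smul_apply,
    Pi.sub_apply, smul_eq_mul]
  ring

/-- `q` is a generic point of a facet of `T ∩ L_A` on the hyperplane `f`, and `p` is a point of
`L_A` on the side of `T`. -/
structure IsFacetPoint (𝓗 : Arrangement d n) (T : Set (Fin d → ℝ)) (A : Finset (Fin n))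
    (f : Fin n) (p q : Fin d → ℝ) : Prop where
  notMem : q ∉ T
  eventually_mem : ∀ᶠ ε in 𝓝[>] (0 : ℝ), AffineMap.lineMap q p ε ∈ T
  mem_flat : p ∈ 𝓗.flat A
  form_ne_zero : 𝓗.form f p ≠ 0
  form_eq_zero_iff : ∀ i, 𝓗.form i q = 0 ↔ i ∈ insert f A

lemma mul_eq_mul_of_lineMap_eq_zero {a b a' b' τ : ℝ} (hτ : τ ≠ 0)
    (h : AffineMap.lineMap a b τ = (0 : ℝ)) (h' : AffineMap.lineMap a' b' τ = (0 : ℝ)) :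
    a * b' = a' * b := by
  rw [AffineMap.lineMap_apply_ring] at h h'
  refine mul_left_cancel₀ hτ ?_
  linear_combination a * h' - a' * h

lemma lineMap_ne_zero_of_receding {a b τ : ℝ} (hτ : 0 ≤ τ) (h : 0 < a * (b - a)) :
    AffineMap.lineMap a b τ ≠ (0 : ℝ) := fun h0 => by
  rw [AffineMap.lineMap_apply_ring'] at h0
  have ha : a ≠ 0 := left_ne_zero_of_mul h.ne'
  have : τ * (a * (b - a)) + a ^ 2 = 0 := by linear_combination a * h0
  have := mul_nonneg hτ h.le
  have := pow_pos (abs_pos.2 ha) 2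
  rw [sq_abs] at this
  linarith

lemma exists_form_eq_zero_of_notMem (hgp : 𝓗.GeneralPosition) (hA : #A ≤ d)
    (hsat : 𝓗.Saturated T) (hT : IsOpen T) (hconv : Convex ℝ T) (hq : q ∉ T)
    (hqp : ∀ᶠ ε in 𝓝[>] (0 : ℝ), AffineMap.lineMap q p ε ∈ T) (hp : p ∈ 𝓗.flat A) :
    ∃ f ∉ A, 𝓗.form f q = 0 := by
  by_contra! hne
  have hmem (i : Fin n) (hi : 𝓗.form i q = 0) : i ∈ A := by_contra fun h => hne i h hi
  have hzero (i : Fin n) (hi : 𝓗.form i q = 0) : 𝓗.form i p = 0 := 𝓗.mem_flat.1 hp i (hmem i hi)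
  obtain ⟨z, hz⟩ := exists_form_eq hgp hA 1
  have hz0 (i : Fin n) (hi : 𝓗.form i q = 0) : 𝓗.form i z ≠ 0 := by
    rw [hz i (hmem i hi)]
    exact one_ne_zero
  obtain ⟨ε, hmem, hnotMem⟩ := ((hsat.eventually_lineMap_mem hT hqp hz0
    fun i hi h => absurd (hzero i hi) h).and (hsat.eventually_lineMap_notMem hT hconv hq hqp hz0
    fun i hi h => absurd (hzero i hi) h)).exists
  exact hnotMem hmem

lemma eventually_lineMap_mem_of_forall_Ico {τ : ℝ} (hτ : 0 < τ)
    (h : ∀ t ∈ Ico 0 τ, AffineMap.lineMap p y t ∈ T) :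
    ∀ᶠ ε in 𝓝[>] (0 : ℝ), AffineMap.lineMap (AffineMap.lineMap p y τ : Fin d → ℝ) p ε ∈ T := by
  filter_upwards [Ioo_mem_nhdsGT one_pos] with ε hε
  have : AffineMap.lineMap (AffineMap.lineMap p y τ : Fin d → ℝ) p ε =
      AffineMap.lineMap p y ((1 - ε) * τ) := by
    ext j
    simp only [AffineMap.lineMap_apply, vsub_eq_sub, vadd_eq_add, Pi.add_apply, Pi.smul_apply,
      Pi.sub_apply, smul_eq_mul]
    ring
  rw [this]
  exact h _ ⟨mul_nonneg (sub_nonneg.2 hε.2.le) hτ.le, by nlinarith [hε.1]⟩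

theorem exists_isFacetPoint (hgp : 𝓗.GeneralPosition) (hsat : 𝓗.Saturated T) (hT : IsOpen T)
    (hconv : Convex ℝ T) (hbdd : Bornology.IsBounded T) (hne : (𝓗.flat A ∩ T).Nonempty)
    (hA : #A < d) (hAC : A ⊆ C) (hC : #C ≤ d) :
    ∃ f ∉ C, ∃ p q, 𝓗.IsFacetPoint T A f p q := by
  obtain ⟨p, ⟨hpA, hpT⟩, hp⟩ := exists_mem_flat_forall_form_ne_zero hgp hA.le hT hne
  obtain ⟨y, hyA, hyp, hyC, hy⟩ := exists_generic_mem_flat_form_receding hgp hA hAC hC hpA hp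
  obtain ⟨τ, hτ, hq, hτT⟩ := exists_first_exit hT hbdd hpT hyp
  set q : Fin d → ℝ := AffineMap.lineMap p y τ
  have hform (i : Fin n) : 𝓗.form i q = AffineMap.lineMap (𝓗.form i p) (𝓗.form i y) τ :=
    AffineMap.apply_lineMap _ _ _ _
  have hqp := eventually_lineMap_mem_of_forall_Ico hτ hτT
  obtain ⟨f, hfA, hfq⟩ := exists_form_eq_zero_of_notMem hgp hA.le hsat hT hconv hq hqp hpA
  have hfC : f ∉ C := fun hfC => lineMap_ne_zero_of_receding hτ.le
    (hyC f (Finset.mem_sdiff.2 ⟨hfC, hfA⟩)) ((hform f).symm.trans hfq)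
  refine ⟨f, hfC, p, q, hq, hqp, hpA, hp f hfA, fun i => ⟨fun hi => ?_, fun hi => ?_⟩⟩
  · by_contra hmem
    rw [Finset.mem_insert, not_or] at hmem
    exact hy f hfA i hmem.2 (Ne.symm hmem.1) <| mul_eq_mul_of_lineMap_eq_zero hτ.ne'
      ((hform f).symm.trans hfq) ((hform i).symm.trans hi)
  · obtain rfl | hiA := Finset.mem_insert.1 hi
    · exact hfq
    · rw [hform i, 𝓗.mem_flat.1 hpA i hiA, 𝓗.mem_flat.1 hyA i hiA, AffineMap.lineMap_same_apply]

end Facets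

section Crossings

open scoped Finset

variable {d n : ℕ} {𝓗 : Arrangement d n} {S : Set (Set (Fin d → ℝ))} {T : Set (Fin d → ℝ)}
  {A C : Finset (Fin n)} {f : Fin n} {p q : Fin d → ℝ}

lemma IsFacetPoint.index_notMem (h : 𝓗.IsFacetPoint T A f p q) : f ∉ A := fun hf =>
  h.form_ne_zero (𝓗.mem_flat.1 h.mem_flat f hf)

lemma IsFacetPoint.eq_of_form_ne_zero (h : 𝓗.IsFacetPoint T A f p q) {i : Fin n}
    (hiq : 𝓗.form i q = 0) (hip : 𝓗.form i p ≠ 0) : i = f :=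
  (Finset.mem_insert.1 ((h.form_eq_zero_iff i).1 hiq)).resolve_right fun hi =>
    hip (𝓗.mem_flat.1 h.mem_flat i hi)

lemma IsFacetPoint.exists_direction (h : 𝓗.IsFacetPoint T A f p q) (hgp : 𝓗.GeneralPosition)
    (hA : #A < d) (t : Finset (Fin n)) {v : ℝ} (hv : v ≠ 0) :
    ∃ z, 𝓗.form f z = v ∧ (∀ a ∈ A, 𝓗.form a z = if a ∈ t then 1 else -1) ∧
      ∀ i, 𝓗.form i q = 0 → 𝓗.form i z ≠ 0 := by
  obtain ⟨z, hz⟩ := exists_form_eq hgp (A := insert f A)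
    ((Finset.card_insert_of_notMem h.index_notMem).trans_le hA)
    (Function.update (fun i => if i ∈ t then 1 else -1) f v)
  obtain ⟨hzf, hzA⟩ := (Finset.forall_mem_insert f A _).1 hz
  rw [Function.update_self] at hzf
  replace hzA : ∀ a ∈ A, 𝓗.form a z = if a ∈ t then 1 else -1 := fun a ha => by
    rw [hzA a ha, Function.update_of_ne (ne_of_mem_of_not_mem ha h.index_notMem)]
  refine ⟨z, hzf, hzA, fun i hi => ?_⟩
  obtain rfl | hiA := Finset.mem_insert.1 ((h.form_eq_zero_iff i).1 hi)
  · rwa [hzf]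
  · rw [hzA i hiA]
    split_ifs <;> norm_num

lemma IsFacetPoint.exists_adjacent_pair (h : 𝓗.IsFacetPoint T A f p q)
    (hgp : 𝓗.GeneralPosition) (hA : #A < d) (hsat : 𝓗.Saturated T) (hT : IsOpen T)
    (hconv : Convex ℝ T) (t : Finset (Fin n)) :
    ∃ x ∈ 𝓗.free ∩ T, ∃ y ∈ 𝓗.free \ T,
      (∀ i ≠ f, SignType.sign (𝓗.form i x) = SignType.sign (𝓗.form i y)) ∧
      ∀ i ≠ f, 0 < 𝓗.form i x ↔ 0 < 𝓗.form i q ∨ i ∈ A ∧ i ∈ t := by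
  obtain ⟨z, hzf, hzA, hz⟩ := h.exists_direction hgp hA t h.form_ne_zero
  obtain ⟨z', hzf', hzA', hz'⟩ := h.exists_direction hgp hA t (neg_ne_zero.2 h.form_ne_zero)
  have hx : ∀ᶠ ε in 𝓝[>] (0 : ℝ), AffineMap.lineMap q z ε ∈ T :=
    hsat.eventually_lineMap_mem hT h.eventually_mem hz fun i hiq hip => by
      rw [h.eq_of_form_ne_zero hiq hip, hzf]
  have hy : ∀ᶠ ε in 𝓝[>] (0 : ℝ), AffineMap.lineMap q z' ε ∉ T :=
    hsat.eventually_lineMap_notMem hT hconv h.notMem h.eventually_mem hz' fun i hiq hip => by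
      rw [h.eq_of_form_ne_zero hiq hip, hzf', Left.sign_neg]
  obtain ⟨ε, ⟨⟨hxT, hxfree⟩, ⟨hyT, hyfree⟩⟩, hxsign, hysign⟩ :=
    (((hx.and (eventually_lineMap_mem_free hz)).and
      (hy.and (eventually_lineMap_mem_free hz'))).and
      ((𝓗.eventually_sign_form_lineMap q z).and (𝓗.eventually_sign_form_lineMap q z'))).exists
  have hmem (i : Fin n) (hi : i ≠ f) : 𝓗.form i q = 0 ↔ i ∈ A := by
    rw [h.form_eq_zero_iff, Finset.mem_insert, or_iff_right hi]
  refine ⟨_, ⟨hxfree, hxT⟩, _, ⟨hyfree, hyT⟩, fun i hi => ?_, fun i hi => ?_⟩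
  · rw [hxsign i, hysign i]
    split_ifs with hiq
    · rw [hzA i ((hmem i hi).1 hiq), hzA' i ((hmem i hi).1 hiq)]
    · rfl
  · rw [← sign_eq_one_iff, hxsign i]
    split_ifs with hiq
    · have hiA := (hmem i hi).1 hiq
      by_cases hit : i ∈ t <;> simp [hzA i hiA, hiq, hiA, hit]
    · simp [(hmem i hi).not.1 hiq, sign_eq_one_iff]

theorem IsFacetPoint.stronglyShatters_crossings (h : 𝓗.IsFacetPoint (thickening S) A f p q)
    (hgp : 𝓗.GeneralPosition) (hA : #A < d) (hS : S ⊆ 𝓗.chambers)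
    (hconv : Convex ℝ (thickening S)) : StronglyShatters (𝓗.crossings S f) A := by
  classical
  refine ⟨({i | 0 < 𝓗.form i q} : Finset (Fin n)), Finset.disjoint_left.2 fun i hi hiA => ?_,
    fun t ht => ?_⟩
  · exact (Finset.mem_filter_univ i |>.1 hi).ne'
      ((h.form_eq_zero_iff i).2 (Finset.mem_insert_of_mem hiA))
  · obtain ⟨x, ⟨hx, hxT⟩, y, ⟨hy, hyT⟩, hsign, hpos⟩ :=
      h.exists_adjacent_pair hgp hA (𝓗.saturated_thickening hS) isOpen_interior hconv t
    convert 𝓗.erase_posSet_mem_crossings hS hx hy hxT hyT hsign using 1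
    ext i
    rw [Finset.mem_union, Finset.mem_filter_univ, Finset.mem_erase, 𝓗.mem_posSet_chamberOf hx]
    by_cases hi : i = f
    · subst hi
      have hiq : 𝓗.form i q = 0 := (h.form_eq_zero_iff i).2 (Finset.mem_insert_self i A)
      have hit : i ∉ t := fun hit => h.index_notMem (ht hit)
      simp [hiq, hit]
    · rw [hpos i hi, and_iff_right hi, and_iff_right_of_imp (@ht i)]

theorem exists_stronglyShatters_crossings (hgp : 𝓗.GeneralPosition) (hS : S ⊆ 𝓗.chambers)
    (hconv : Convex ℝ (thickening S)) (hbdd : Bornology.IsBounded (thickening S))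
    (hsupp : A ∈ 𝓗.supp S) (hA : #A < d) (hAC : A ⊆ C) (hC : #C ≤ d) :
    ∃ f ∉ C, StronglyShatters (𝓗.crossings S f) A := by
  obtain ⟨f, hf, p, q, h⟩ := exists_isFacetPoint hgp (𝓗.saturated_thickening hS)
    isOpen_interior hconv hbdd (inter_comm _ _ ▸ hsupp) hA hAC hC
  exact ⟨f, hf, h.stronglyShatters_crossings hgp hA hS hconv⟩

open Classical in
theorem lt_card_add_card_stronglyShatters_crossings (hgp : 𝓗.GeneralPosition)
    (hS : S ⊆ 𝓗.chambers) (hconv : Convex ℝ (thickening S))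
    (hbdd : Bornology.IsBounded (thickening S)) (hsupp : A ∈ 𝓗.supp S) (hA : #A < d) :
    d < #A + #{f | StronglyShatters (𝓗.crossings S f) A} := by
  by_contra! hle
  obtain ⟨f, hf, hshatters⟩ := exists_stronglyShatters_crossings hgp hS hconv hbdd hsupp hA
    Finset.subset_union_left ((Finset.card_union_le A _).trans hle)
  exact hf (Finset.mem_union_right _ ((Finset.mem_filter_univ f).2 hshatters))

theorem sum_sub_card_add_one_le_ncard_edgeBoundary (hgp : 𝓗.GeneralPosition)
    (hS : S ⊆ 𝓗.chambers) (hconv : Convex ℝ (thickening S))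
    (hbdd : Bornology.IsBounded (thickening S)) {𝓢 : Finset (Finset (Fin n))}
    (hsupp : ∀ A ∈ 𝓢, A ∈ 𝓗.supp S) :
    ∑ A ∈ 𝓢 with #A < d, ((d : ℝ) - #A + 1) ≤ (𝓗.edgeBoundary S).ncard := by
  classical
  calc ∑ A ∈ 𝓢 with #A < d, ((d : ℝ) - #A + 1)
      ≤ ∑ A ∈ 𝓢 with #A < d, (#{f | StronglyShatters (𝓗.crossings S f) A} : ℝ) := by
        refine Finset.sum_le_sum fun A hA => ?_
        obtain ⟨hA, hAd⟩ := Finset.mem_filter.1 hA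
        have hlt := lt_card_add_card_stronglyShatters_crossings hgp hS hconv hbdd (hsupp A hA) hAd
        have : (d : ℝ) + 1 ≤ #A + #{f | StronglyShatters (𝓗.crossings S f) A} := by
          exact_mod_cast hlt
        linarith
    _ ≤ ∑ f, (#(𝓗.crossings S f) : ℝ) := by
        exact_mod_cast sum_card_stronglyShatters_le _ (𝓗.crossings S)
    _ ≤ (𝓗.edgeBoundary S).ncard := by exact_mod_cast 𝓗.sum_card_crossings_le S

end Crossings

end Arrangement

/-- If moreover the thickening `T_S` of the proper convex set `S` is
bounded, then `|∂S| ≥ ∑_{i=0}^{d-1} (d-i+1)·C(k,i)`. -/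
theorem stmt7 {d n : ℕ} (𝓗 : Arrangement d n) (hgp : 𝓗.GeneralPosition)
    (S : Set (Set (Fin d → ℝ))) (hS : S ⊆ 𝓗.chambers)
    (hproper : S ≠ 𝓗.chambers)
    (hconv : Convex ℝ (thickening S))
    (hbdd : Bornology.IsBounded (thickening S))
    (k : ℝ) (hk : (d : ℝ) - 1 ≤ k)
    (hcard : (S.ncard : ℝ) = ∑ i ∈ Finset.range (d + 1), gchoose k i) :
    (∑ i ∈ Finset.range d, ((d : ℝ) - i + 1) * gchoose k i) ≤
      ((𝓗.edgeBoundary S).ncard : ℝ) := by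
  obtain ⟨𝓢, h𝓢⟩ := (toFinite (𝓗.supp S)).exists_finset_coe
  have hsupp : ∀ A ∈ 𝓢, A ∈ 𝓗.supp S := fun A hA => h𝓢 ▸ Finset.mem_coe.2 hA
  have hcard𝓢 : ∑ i ∈ Finset.range (d + 1), gchoose k i ≤ 𝓢.card := by
    rw [← hcard, Nat.cast_le, ← ncard_coe_finset, h𝓢]
    exact 𝓗.ncard_le_ncard_supp hS hconv
  calc ∑ i ∈ Finset.range d, ((d : ℝ) - i + 1) * gchoose k i
      ≤ ∑ A ∈ 𝓢 with A.card < d, ((d : ℝ) - A.card + 1) :=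
        sum_mul_gchoose_le_sum_card_filter (w := fun i => (d : ℝ) - i + 1)
          (h𝓢 ▸ 𝓗.isLowerSet_supp S) (fun A hA => 𝓗.card_le_of_mem_supp hgp (hsupp A hA)) hk hcard𝓢
          (fun i _ j _ hij => by dsimp only; gcongr)
          fun i hi => by linarith [Nat.cast_le (α := ℝ).2 (Finset.mem_range.1 hi).le]
    _ ≤ (𝓗.edgeBoundary S).ncard :=
        Arrangement.sum_sub_card_add_one_le_ncard_edgeBoundary hgp hS hconv hbdd hsupp
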